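/- arXiv:2407.21456 — 2 statements merged into one kernel-verified Lean document; each statement's English description precedes it below -/
import Mathlib

section
/- For any bounded measurable weight function a: ℝ^{d_Y}×ℝ^{d_Z} → [0,∞) that is positive on the support of p_{Y,Z}, the conditional ball divergence satisfies ζ_a(X,Y|Z) ≥ 0, and ζ_a(X,Y|Z) = 0 if and only if X and Y are conditionally independent given Z. -/
open MeasureTheory ProbabilityTheory Filter
open scoped ENNReal NNReal Topology

noncomputable section

/-- `ℝ^d` with the Euclidean norm. -/
abbrev Euc (d : ℕ) : Type := EuclideanSpace ℝ (Fin d)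

/-- The ball divergence `Θ²(P, Q)` between two Borel measures on `ℝ^d`:
`∫∫ ((P - Q)(B̄(u, ‖v - u‖)))² [dP(u)dP(v) + dQ(u)dQ(v)]`. -/
def ballDiv {d : ℕ} (P Q : Measure (Euc d)) : ℝ :=
  (∫ u, ∫ v, ((P (Metric.closedBall u (dist v u))).toReal
      - (Q (Metric.closedBall u (dist v u))).toReal) ^ 2 ∂P ∂P)
  + (∫ u, ∫ v, ((P (Metric.closedBall u (dist v u))).toReal
      - (Q (Metric.closedBall u (dist v u))).toReal) ^ 2 ∂Q ∂Q)

/-- The `(Y, Z)`-marginal density `p_{Y,Z}`. -/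
def margYZ {dX dY dZ : ℕ} (p : Euc dX → Euc dY → Euc dZ → ℝ) (y : Euc dY) (z : Euc dZ) : ℝ :=
  ∫ x, p x y z

lemma measurable_ball_kernel {d : ℕ} {α : Type*} [MeasurableSpace α] (κ : Kernel α (Euc d))
    [IsMarkovKernel κ] :
    Measurable fun t : (α × Euc d) × Euc d =>
      (κ t.1.1 (Metric.closedBall t.1.2 (dist t.2 t.1.2))).toReal := by
  let κ' : Kernel ((α × Euc d) × Euc d) (Euc d) := κ.comap (fun t => t.1.1) (by fun_prop)
  have hs : MeasurableSet {q : ((α × Euc d) × Euc d) × Euc d |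
      dist q.2 q.1.1.2 ≤ dist q.1.2 q.1.1.2} :=
    measurableSet_le (by fun_prop) (by fun_prop)
  exact (Kernel.measurable_kernel_prodMk_left (κ := κ') hs).ennreal_toReal

lemma measurable_ballDiv {d : ℕ} {α : Type*} [MeasurableSpace α] (κ η : Kernel α (Euc d))
    [IsMarkovKernel κ] [IsMarkovKernel η] : Measurable fun w => ballDiv (κ w) (η w) := by
  have hm : Measurable fun t : (α × Euc d) × Euc d =>
      ((κ t.1.1 (Metric.closedBall t.1.2 (dist t.2 t.1.2))).toReal
        - (η t.1.1 (Metric.closedBall t.1.2 (dist t.2 t.1.2))).toReal) ^ 2 :=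
    ((measurable_ball_kernel κ).sub (measurable_ball_kernel η)).pow_const 2
  have key : ∀ (ν : Kernel α (Euc d)) [IsMarkovKernel ν], Measurable fun w =>
      ∫ u, ∫ v, ((κ w (Metric.closedBall u (dist v u))).toReal
        - (η w (Metric.closedBall u (dist v u))).toReal) ^ 2 ∂(ν w) ∂(ν w) := by
    intro ν _
    let ν' : Kernel (α × Euc d) (Euc d) := ν.comap (fun t => t.1) (by fun_prop)
    have h1 := hm.stronglyMeasurable.integral_kernel_prod_right' (κ := ν')
    have h2 := h1.integral_kernel_prod_right' (κ := ν)
    exact h2.measurable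
  exact (key κ).add (key η)

lemma ballDiv_nonneg' {d : ℕ} (P Q : Measure (Euc d)) : 0 ≤ ballDiv P Q := by
  unfold ballDiv
  positivity

lemma sq_sub_le_one_aux {d : ℕ} (P Q : Measure (Euc d)) [IsProbabilityMeasure P]
    [IsProbabilityMeasure Q] (s : Set (Euc d)) : ((P s).toReal - (Q s).toReal) ^ 2 ≤ 1 := by
  have h1 : (P s).toReal ≤ 1 := measureReal_le_one (μ := P)
  have h2 : (Q s).toReal ≤ 1 := measureReal_le_one (μ := Q)
  have h3 : 0 ≤ (P s).toReal := ENNReal.toReal_nonneg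
  have h4 : 0 ≤ (Q s).toReal := ENNReal.toReal_nonneg
  nlinarith

lemma integral_le_one_aux {β : Type*} [MeasurableSpace β] (ρ : Measure β) [IsProbabilityMeasure ρ]
    (f : β → ℝ) (h0 : ∀ x, 0 ≤ f x) (h : ∀ x, f x ≤ 1) : ∫ x, f x ∂ρ ≤ 1 := by
  have := integral_mono_of_nonneg (μ := ρ) (f := f) (g := fun _ => (1 : ℝ)) (Eventually.of_forall h0)
    (integrable_const _) (Eventually.of_forall h)
  simpa using this

lemma ballDiv_le_two {d : ℕ} (P Q : Measure (Euc d)) [IsProbabilityMeasure P]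
    [IsProbabilityMeasure Q] : ballDiv P Q ≤ 2 := by
  have key : ∀ (ρ : Measure (Euc d)) [IsProbabilityMeasure ρ],
      (∫ u, ∫ v, ((P (Metric.closedBall u (dist v u))).toReal
      - (Q (Metric.closedBall u (dist v u))).toReal) ^ 2 ∂ρ ∂ρ) ≤ 1 := by
    intro ρ _
    refine integral_le_one_aux ρ _ (fun u => by positivity) fun u => ?_
    exact integral_le_one_aux ρ _ (fun v => by positivity) fun v => sq_sub_le_one_aux P Q _
  have h1 := key P
  have h2 := key Q
  unfold ballDiv
  linarith

lemma condDistrib_swap_aux {dX dY dZ : ℕ} {Ω : Type} [MeasurableSpace Ω]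
    (μ : Measure Ω) [IsProbabilityMeasure μ]
    (X : Ω → Euc dX) (Y : Ω → Euc dY) (Z : Ω → Euc dZ)
    (hX : Measurable X) (hY : Measurable Y) (hZ : Measurable Z) :
    ∀ᵐ ω ∂μ, condDistrib X (fun ω' => (Y ω', Z ω')) μ (Y ω, Z ω)
      = condDistrib X (fun ω' => (Z ω', Y ω')) μ (Z ω, Y ω) := by
  let κ : Kernel (Euc dY × Euc dZ) (Euc dX) :=
    (condDistrib X (fun ω' => (Z ω', Y ω')) μ).comap Prod.swap measurable_swap
  have h : condDistrib X (fun ω' => (Y ω', Z ω')) μ =ᵐ[μ.map (fun ω' => (Y ω', Z ω'))] κ := by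
    rw [condDistrib_ae_eq_iff_measure_eq_compProd _ hX.aemeasurable]
    have h0 := compProd_map_condDistrib (μ := μ) (mβ := inferInstance) (X := fun ω' => (Z ω', Y ω')) (Y := X)
      hX.aemeasurable
    ext s hs
    rw [Measure.compProd_apply hs, lintegral_map (Kernel.measurable_kernel_prodMk_left hs)
      (by fun_prop), Measure.map_apply (by fun_prop) hs]
    let s' : Set ((Euc dZ × Euc dY) × Euc dX) := (fun q => (q.1.swap, q.2)) ⁻¹' s
    have hs' : MeasurableSet s' := by
      refine MeasurableSet.preimage hs ?_
      fun_prop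
    have h1 := congrArg (fun m => m s') h0
    simp only at h1
    rw [Measure.compProd_apply hs', lintegral_map (Kernel.measurable_kernel_prodMk_left hs')
      (by fun_prop), Measure.map_apply (by fun_prop) hs'] at h1
    exact h1.symm
  exact ae_of_ae_map (by fun_prop) h

lemma condIndep_iff_aux {dX dY dZ : ℕ} {Ω : Type} [MeasurableSpace Ω] [StandardBorelSpace Ω]
    (μ : Measure Ω) [IsProbabilityMeasure μ]
    (X : Ω → Euc dX) (Y : Ω → Euc dY) (Z : Ω → Euc dZ)
    (hX : Measurable X) (hY : Measurable Y) (hZ : Measurable Z) :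
    CondIndepFun (MeasurableSpace.comap Z inferInstance) hZ.comap_le X Y μ ↔
    ∀ᵐ ω ∂μ, condDistrib X (fun ω' => (Y ω', Z ω')) μ (Y ω, Z ω) = condDistrib X Z μ (Z ω) := by
  have h := condDistrib_swap_aux μ X Y Z hX hY hZ
  have h2 := condIndepFun_iff_condDistrib_prod_ae_eq_prodMkRight (μ := μ) hX hY hZ
  constructor
  · intro hc
    have h3 := ae_of_ae_map (by fun_prop) (h2.1 hc.symm)
    filter_upwards [h, h3] with ω h4 h5
    rw [h4, h5]
    simp
  · intro hc
    refine CondIndepFun.symm (h2.2 ?_)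
    have h3 : ∀ᵐ ω ∂μ, condDistrib X (fun ω' => (Z ω', Y ω')) μ (Z ω, Y ω)
        = (condDistrib X Z μ).prodMkRight (Euc dY) (Z ω, Y ω) := by
      filter_upwards [h, hc] with ω h4 h5
      rw [← h4, h5]
      simp
    have hk := condDistrib_ae_eq_iff_measure_eq_compProd (μ := μ) (fun ω' => (Z ω', Y ω'))
      hX.aemeasurable (κ := (condDistrib X Z μ).prodMkRight (Euc dY))
    rw [hk]
    rw [← compProd_map_condDistrib (μ := μ) (mβ := inferInstance) (X := fun ω' => (Z ω', Y ω')) (Y := X)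
      hX.aemeasurable]
    ext s hs
    rw [Measure.compProd_apply hs, Measure.compProd_apply hs,
      lintegral_map (Kernel.measurable_kernel_prodMk_left hs) (by fun_prop),
      lintegral_map (Kernel.measurable_kernel_prodMk_left hs) (by fun_prop)]
    refine lintegral_congr_ae ?_
    filter_upwards [h3] with ω hω
    rw [hω]

lemma marg_pos_aux {dX dY dZ : ℕ} {Ω : Type} [MeasurableSpace Ω]
    (μ : Measure Ω) [IsProbabilityMeasure μ]
    (X : Ω → Euc dX) (Y : Ω → Euc dY) (Z : Ω → Euc dZ)
    (hX : Measurable X) (hY : Measurable Y) (hZ : Measurable Z)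
    (p : Euc dX → Euc dY → Euc dZ → ℝ)
    (hp_meas : Measurable fun v : Euc dX × Euc dY × Euc dZ => p v.1 v.2.1 v.2.2)
    (hp_nonneg : ∀ x y z, 0 ≤ p x y z)
    (hlaw : μ.map (fun ω => (X ω, Y ω, Z ω))
      = volume.withDensity fun v => ENNReal.ofReal (p v.1 v.2.1 v.2.2)) :
    ∀ᵐ ω ∂μ, 0 < margYZ p (Y ω) (Z ω) := by
  let g : Euc dY × Euc dZ → ℝ≥0∞ := fun w => ∫⁻ x, ENNReal.ofReal (p x w.1 w.2)
  have hpm : Measurable fun v : Euc dX × Euc dY × Euc dZ =>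
      ENNReal.ofReal (p v.1 v.2.1 v.2.2) := hp_meas.ennreal_ofReal
  have hg : Measurable g := hpm.lintegral_prod_left'
  have hYZ : μ.map (fun ω => (Y ω, Z ω)) = volume.withDensity g := by
    ext s hs
    have h1 : μ.map (fun ω => (Y ω, Z ω)) s
        = μ.map (fun ω => (X ω, Y ω, Z ω)) (Prod.snd ⁻¹' s) := by
      rw [Measure.map_apply (by fun_prop) hs,
        Measure.map_apply (by fun_prop) (measurable_snd hs)]
      rfl
    rw [h1, hlaw, withDensity_apply _ (measurable_snd hs), withDensity_apply _ hs,
      ← lintegral_indicator (measurable_snd hs), ← lintegral_indicator hs, Measure.volume_eq_prod,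
      lintegral_prod_symm' _ (hpm.indicator (measurable_snd hs))]
    refine lintegral_congr fun w => ?_
    by_cases hw : w ∈ s
    · simp [Set.indicator, hw, g]
    · simp [Set.indicator, hw]
  have hone : ∫⁻ w, g w = 1 := by
    have : (volume.withDensity g) Set.univ = 1 := by
      rw [← hYZ, Measure.map_apply (by fun_prop) MeasurableSet.univ]
      simp
    simpa using this
  have hfin : ∀ᵐ w, g w < ∞ := ae_lt_top hg (by rw [hone]; simp)
  have hpos : ∀ᵐ w ∂(volume.withDensity g), 0 < margYZ p w.1 w.2 := by
    rw [ae_withDensity_iff hg]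
    filter_upwards [hfin] with w hw hne
    have : margYZ p w.1 w.2 = (g w).toReal := by
      unfold margYZ
      rw [integral_eq_lintegral_of_nonneg_ae (Eventually.of_forall fun x => hp_nonneg _ _ _)]
      have : Measurable fun x => p x w.1 w.2 :=
        hp_meas.comp (measurable_id.prodMk measurable_const)
      exact this.aestronglyMeasurable
    rw [this]
    exact ENNReal.toReal_pos hne hw.ne
  rw [← hYZ] at hpos
  exact ae_of_ae_map (f := fun ω => (Y ω, Z ω)) (hY.prodMk hZ).aemeasurable hpos

/-- For any bounded measurable weight function `a ≥ 0` which is positive on the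
support of `p_{Y,Z}`, the conditional ball divergence
`ζ_a(X, Y | Z) = E[Θ²(P_{X|Y,Z}, P_{X|Z}) a(Y,Z)]` is nonnegative, and it vanishes if and only if
`X` and `Y` are conditionally independent given `Z`.  (The characterization `Θ²(P,Q) = 0 ↔ P = Q`
of the ball divergence, due to Pan et al., is taken as a hypothesis.) -/
theorem condBallDiv_nonneg_and_eq_zero_iff_condIndep
    {dX dY dZ : ℕ} {Ω : Type} [MeasurableSpace Ω] [StandardBorelSpace Ω] [Nonempty Ω]
    (μ : Measure Ω) [IsProbabilityMeasure μ]
    (X : Ω → Euc dX) (Y : Ω → Euc dY) (Z : Ω → Euc dZ)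
    (hX : Measurable X) (hY : Measurable Y) (hZ : Measurable Z)
    -- the joint distribution has density `p` with respect to Lebesgue measure
    (p : Euc dX → Euc dY → Euc dZ → ℝ)
    (hp_meas : Measurable fun v : Euc dX × Euc dY × Euc dZ => p v.1 v.2.1 v.2.2)
    (hp_nonneg : ∀ x y z, 0 ≤ p x y z)
    (hlaw : μ.map (fun ω => (X ω, Y ω, Z ω))
      = volume.withDensity fun v => ENNReal.ofReal (p v.1 v.2.1 v.2.2))
    -- the weight function: bounded, measurable, nonnegative, positive on the support of `p_{Y,Z}`
    (a : Euc dY → Euc dZ → ℝ)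
    (ha_meas : Measurable fun w : Euc dY × Euc dZ => a w.1 w.2)
    (ha_nonneg : ∀ y z, 0 ≤ a y z) (ha_bdd : ∃ C : ℝ, ∀ y z, a y z ≤ C)
    (ha_pos : ∀ y z, 0 < margYZ p y z → 0 < a y z)
    -- the distribution-characterizing property of the ball divergence (Pan et al.)
    (hBD : ∀ P Q : Measure (Euc dX), IsProbabilityMeasure P → IsProbabilityMeasure Q →
      (ballDiv P Q = 0 ↔ P = Q)) :
    0 ≤ ∫ ω, ballDiv (condDistrib X (fun ω' => (Y ω', Z ω')) μ (Y ω, Z ω))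
          (condDistrib X Z μ (Z ω)) * a (Y ω) (Z ω) ∂μ ∧
      ((∫ ω, ballDiv (condDistrib X (fun ω' => (Y ω', Z ω')) μ (Y ω, Z ω))
          (condDistrib X Z μ (Z ω)) * a (Y ω) (Z ω) ∂μ) = 0 ↔
        CondIndepFun (MeasurableSpace.comap Z inferInstance) hZ.comap_le X Y μ) := by
  have hD0 : ∀ ω, 0 ≤ ballDiv (condDistrib X (fun ω' => (Y ω', Z ω')) μ (Y ω, Z ω))
          (condDistrib X Z μ (Z ω)) * a (Y ω) (Z ω) :=
    fun ω => mul_nonneg (ballDiv_nonneg' _ _) (ha_nonneg _ _)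
  refine ⟨integral_nonneg hD0, ?_⟩
  have hmeas : Measurable fun ω => ballDiv (condDistrib X (fun ω' => (Y ω', Z ω')) μ (Y ω, Z ω))
          (condDistrib X Z μ (Z ω)) * a (Y ω) (Z ω) := by
    have h1 := measurable_ballDiv (condDistrib X (fun ω' => (Y ω', Z ω')) μ)
      ((condDistrib X Z μ).comap (Prod.snd : Euc dY × Euc dZ → Euc dZ) measurable_snd)
    exact (h1.mul ha_meas).comp (hY.prodMk hZ)
  obtain ⟨C, hC⟩ := ha_bdd
  have hint : Integrable (fun ω => ballDiv (condDistrib X (fun ω' => (Y ω', Z ω')) μ (Y ω, Z ω))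
          (condDistrib X Z μ (Z ω)) * a (Y ω) (Z ω)) μ := by
    refine Integrable.of_bound hmeas.aestronglyMeasurable (2 * C) (Eventually.of_forall fun ω => ?_)
    rw [Real.norm_of_nonneg (hD0 ω)]
    exact mul_le_mul (ballDiv_le_two _ _) (hC _ _) (ha_nonneg _ _) (by norm_num)
  rw [integral_eq_zero_iff_of_nonneg hD0 hint, condIndep_iff_aux μ X Y Z hX hY hZ]
  have hpos := marg_pos_aux μ X Y Z hX hY hZ p hp_meas hp_nonneg hlaw
  constructor
  · intro h
    filter_upwards [h, hpos] with ω h1 h2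
    have h3 := (mul_eq_zero.1 h1).resolve_right (ha_pos _ _ h2).ne'
    exact (hBD _ _ inferInstance inferInstance).1 h3
  · intro h
    filter_upwards [h] with ω h1
    have h3 := (hBD _ _ inferInstance inferInstance).2 h1
    simp only [Pi.zero_apply]
    rw [h3, zero_mul]

end
end

section
/- For any Borel probability measures F and G on ℝ^d, the ball divergence satisfies Θ²(F,G) ≤ ∫ Θ²(δ_w, G) dF(w), where δ_w denotes the Dirac point mass at w. -/
open MeasureTheory ProbabilityTheory Filter
open scoped ENNReal NNReal Topology

noncomputable section

namespace BD

variable {d : ℕ}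

def bm (μ : Measure (Euc d)) (u v : Euc d) : ℝ := (μ (Metric.closedBall u (dist v u))).toReal

def at' (μ : Measure (Euc d)) (u : Euc d) : ℝ := (μ {u}).toReal

/-- indicator of `w ∈ B̄(u, |v-u|)` -/
def ind (u v w : Euc d) : ℝ := if dist w u ≤ dist v u then 1 else 0

lemma meas_ind : Measurable (fun z : (Euc d × Euc d) × Euc d => ind z.1.1 z.1.2 z.2) := by
  unfold ind
  refine Measurable.ite ?_ measurable_const measurable_const
  exact measurableSet_le (by fun_prop) (by fun_prop)

lemma ind_nonneg (u v w : Euc d) : 0 ≤ ind u v w := by unfold ind; split_ifs <;> norm_num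
lemma ind_le (u v w : Euc d) : ind u v w ≤ 1 := by unfold ind; split_ifs <;> norm_num
lemma ind_sq (u v w : Euc d) : ind u v w ^ 2 = ind u v w := by unfold ind; split_ifs <;> norm_num

lemma meas_bm (μ : Measure (Euc d)) [IsProbabilityMeasure μ] :
    Measurable (fun z : Euc d × Euc d => bm μ z.1 z.2) := by
  unfold bm
  apply Measurable.ennreal_toReal
  have hs : MeasurableSet {z : (Euc d × Euc d) × Euc d | dist z.2 z.1.1 ≤ dist z.1.2 z.1.1} :=
    measurableSet_le (by fun_prop) (by fun_prop)
  exact measurable_measure_prodMk_left (ν := μ) hs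

lemma meas_bm1 (μ : Measure (Euc d)) [IsProbabilityMeasure μ] (u : Euc d) :
    Measurable (fun v : Euc d => bm μ u v) := by
  have h : Measurable (fun v : Euc d => (u, v)) := measurable_prodMk_left
  have := (meas_bm μ).comp h
  exact this

lemma meas_ind_w (u v : Euc d) : Measurable (fun w : Euc d => ind u v w) := by
  have h : Measurable (fun w : Euc d => ((u, v), w)) := measurable_prodMk_left
  have := meas_ind.comp h
  exact this

lemma meas_ind_uv (w : Euc d) : Measurable (fun z : Euc d × Euc d => ind z.1 z.2 w) := by
  have h : Measurable (fun z : Euc d × Euc d => (z, w)) := measurable_prodMk_right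
  have := meas_ind.comp h
  exact this

lemma bm_self (μ : Measure (Euc d)) (u : Euc d) : bm μ u u = at' μ u := by
  simp [bm, at']

lemma meas_at (μ : Measure (Euc d)) [IsProbabilityMeasure μ] : Measurable (at' μ) := by
  have := (meas_bm μ).comp (measurable_id.prodMk measurable_id)
  convert this using 1
  ext u; simp [bm_self]

lemma bm_nonneg (μ : Measure (Euc d)) (u v : Euc d) : 0 ≤ bm μ u v := ENNReal.toReal_nonneg
lemma bm_le (μ : Measure (Euc d)) [IsProbabilityMeasure μ] (u v : Euc d) : bm μ u v ≤ 1 :=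
  measureReal_le_one
lemma at_nonneg (μ : Measure (Euc d)) (u : Euc d) : 0 ≤ at' μ u := ENNReal.toReal_nonneg
lemma at_le (μ : Measure (Euc d)) [IsProbabilityMeasure μ] (u : Euc d) : at' μ u ≤ 1 :=
  measureReal_le_one
lemma at_le_bm (μ : Measure (Euc d)) [IsProbabilityMeasure μ] (u v : Euc d) :
    at' μ u ≤ bm μ u v := by
  apply measureReal_mono (μ := μ)
  simp

/-- bounded measurable functions are integrable -/
lemma integ {X : Type*} [MeasurableSpace X] (μ : Measure X) [IsFiniteMeasure μ] {f : X → ℝ}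
    (hf : Measurable f) (C : ℝ) (h0 : ∀ x, 0 ≤ f x) (h1 : ∀ x, f x ≤ C) : Integrable f μ :=
  Integrable.of_bound hf.aestronglyMeasurable C
    (Eventually.of_forall fun x => by rw [Real.norm_eq_abs, abs_of_nonneg (h0 x)]; exact h1 x)

lemma integral_ind (μ : Measure (Euc d)) [IsProbabilityMeasure μ] (u v : Euc d) :
    ∫ w, ind u v w ∂μ = bm μ u v := by
  have : (fun w => ind u v w) = (Metric.closedBall u (dist v u)).indicator (fun _ => (1:ℝ)) := by
    ext w; simp [ind, Set.indicator, Metric.mem_closedBall]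
  rw [this, integral_indicator Metric.isClosed_closedBall.measurableSet]
  simp [bm, Measure.real]

lemma sq_sub_le {a b : ℝ} (ha : 0 ≤ a) (ha1 : a ≤ 1) (hb : 0 ≤ b) (hb1 : b ≤ 1) :
    (a - b) ^ 2 ≤ 1 := by nlinarith

lemma meas_ind_vw (u : Euc d) : Measurable (fun z : Euc d × Euc d => ind u z.1 z.2) := by
  have h : Measurable (fun z : Euc d × Euc d => ((u, z.1), z.2)) := by fun_prop
  have := meas_ind.comp h
  exact this

lemma sym (ν : Measure (Euc d)) [IsFiniteMeasure ν] (u : Euc d) :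
    ν.real Set.univ * ν.real Set.univ ≤ 2 * ∫ v, ∫ w, ind u v w ∂ν ∂ν := by
  have hJi : Integrable (fun z : Euc d × Euc d => ind u z.1 z.2) (ν.prod ν) :=
    integ _ (meas_ind_vw u) 1 (fun z => ind_nonneg _ _ _) (fun z => ind_le _ _ _)
  have hsw : ∫ v, ∫ w, ind u v w ∂ν ∂ν = ∫ v, ∫ w, ind u w v ∂ν ∂ν :=
    integral_integral_swap hJi
  have hJi' : Integrable (fun z : Euc d × Euc d => ind u z.2 z.1) (ν.prod ν) := hJi.swap
  have a1 : ∫ v, ∫ w, ind u v w ∂ν ∂ν = ∫ z, ind u z.1 z.2 ∂(ν.prod ν) :=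
    (integral_prod _ hJi).symm
  have a2 : ∫ v, ∫ w, ind u w v ∂ν ∂ν = ∫ z, ind u z.2 z.1 ∂(ν.prod ν) :=
    (integral_prod _ hJi').symm
  have a3 : ∫ _z, (1:ℝ) ∂(ν.prod ν)
      ≤ ∫ z, (ind u z.1 z.2 + ind u z.2 z.1) ∂(ν.prod ν) := by
    refine integral_mono (integrable_const _) (hJi.add hJi') ?_
    intro z
    show (1:ℝ) ≤ ind u z.1 z.2 + ind u z.2 z.1
    unfold ind
    rcases le_total (dist z.1 u) (dist z.2 u) with h | h
    · rw [if_pos h]; split_ifs <;> norm_num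
    · rw [if_pos h]; split_ifs <;> norm_num
  rw [integral_add hJi hJi', integral_const, ← Set.univ_prod_univ, measureReal_prod_prod,
    smul_eq_mul, mul_one] at a3
  linarith

lemma restr (F : Measure (Euc d)) [IsProbabilityMeasure F] (S : Set (Euc d)) (u : Euc d) :
    F.real S * F.real S ≤ 2 * ∫ v in S, bm F u v ∂F := by
  have h1 := sym (F.restrict S) u
  rw [measureReal_restrict_apply MeasurableSet.univ, Set.univ_inter] at h1
  have hJi : Integrable (fun z : Euc d × Euc d => ind u z.1 z.2)
      ((F.restrict S).prod (F.restrict S)) :=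
    integ _ (meas_ind_vw u) 1 (fun z => ind_nonneg _ _ _) (fun z => ind_le _ _ _)
  have hle : ∫ v in S, ∫ w in S, ind u v w ∂F ∂F ≤ ∫ v in S, bm F u v ∂F := by
    refine integral_mono hJi.integral_prod_left
      (integ _ (meas_bm1 F u) 1 (bm_nonneg F u) (bm_le F u)) ?_
    intro v
    show ∫ w in S, ind u v w ∂F ≤ bm F u v
    rw [← integral_ind F u v]
    exact setIntegral_le_integral
      (integ _ (meas_ind_w u v) 1 (fun z => ind_nonneg _ _ _) (fun z => ind_le _ _ _))
      (Eventually.of_forall fun w => ind_nonneg _ _ _)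
  linarith

/-- `∫ (g - f)_+ ≤ g²/2`. -/
lemma key1 (F : Measure (Euc d)) [IsProbabilityMeasure F] (u : Euc d) (g : ℝ) :
    ∫ v, max 0 (g - bm F u v) ∂F ≤ g ^ 2 / 2 := by
  have hm : Measurable (fun v => bm F u v) := meas_bm1 F u
  obtain ⟨S, hS⟩ : ∃ S : Set (Euc d), S = {v | bm F u v < g} := ⟨_, rfl⟩
  have hSm : MeasurableSet S := by rw [hS]; exact measurableSet_lt hm measurable_const
  have e1 : (fun v => max 0 (g - bm F u v)) = S.indicator (fun v => g - bm F u v) := by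
    ext v
    by_cases h : v ∈ S
    · rw [Set.indicator_of_mem h]
      rw [hS, Set.mem_setOf_eq] at h
      exact max_eq_right (by linarith)
    · rw [Set.indicator_of_notMem h]
      rw [hS, Set.mem_setOf_eq] at h
      exact max_eq_left (by linarith)
  have hib : Integrable (fun v => bm F u v) (F.restrict S) :=
    integ _ hm 1 (bm_nonneg F u) (bm_le F u)
  rw [e1, integral_indicator hSm, integral_sub (integrable_const _) hib, setIntegral_const,
    smul_eq_mul]
  have := restr F S u
  nlinarith [sq_nonneg (g - F.real S)]

lemma key2 (F G : Measure (Euc d)) [IsProbabilityMeasure F] [IsProbabilityMeasure G] (u : Euc d) :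
    ∫ v, (bm F u v - bm G u v) ^ 2 ∂F ≤ (1 - at' G u) ^ 2 + at' G u ^ 2 * (1 - at' F u) := by
  have hF : Measurable (fun v => bm F u v) := meas_bm1 F u
  have hG : Measurable (fun v => bm G u v) := meas_bm1 G u
  have hi : Integrable (fun v => (bm F u v - bm G u v) ^ 2) F :=
    integ _ ((hF.sub hG).pow_const 2) 1 (fun v => sq_nonneg _)
      (fun v => sq_sub_le (bm_nonneg _ _ _) (bm_le _ _ _) (bm_nonneg _ _ _) (bm_le _ _ _))
  set g := at' G u with hg
  set p := at' F u with hp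
  have g0 : 0 ≤ g := at_nonneg _ _
  have g1 : g ≤ 1 := at_le _ _
  have p0 : 0 ≤ p := at_nonneg _ _
  have p1 : p ≤ 1 := at_le _ _
  rcases le_or_gt g p with hgp | hgp
  · have : ∫ v, (bm F u v - bm G u v) ^ 2 ∂F ≤ ∫ _v, (1 - g) ^ 2 ∂F := by
      refine integral_mono hi (integrable_const _) ?_
      intro v
      have h1 : p ≤ bm F u v := at_le_bm _ _ _
      have h2 : g ≤ bm G u v := at_le_bm _ _ _
      have h3 := bm_le F u v
      have h4 := bm_le G u v
      exact sq_le_sq' (by linarith) (by linarith)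
    simp at this
    nlinarith [mul_nonneg (sq_nonneg g) (sub_nonneg.2 p1)]
  · have hmi : Integrable (fun v => max 0 (g - bm F u v)) F :=
      integ _ (measurable_const.max (measurable_const.sub hF)) 1 (fun v => le_max_left _ _)
        (fun v => max_le zero_le_one (by linarith [bm_nonneg F u v]))
    have : ∫ v, (bm F u v - bm G u v) ^ 2 ∂F
        ≤ ∫ v, ((1 - g) ^ 2 + (2 - g - p) * max 0 (g - bm F u v)) ∂F := by
      refine integral_mono hi ((integrable_const _).add (hmi.const_mul _)) ?_
      intro v
      show (bm F u v - bm G u v) ^ 2 ≤ (1 - g) ^ 2 + (2 - g - p) * max 0 (g - bm F u v)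
      have h1 : p ≤ bm F u v := at_le_bm _ _ _
      have h2 : g ≤ bm G u v := at_le_bm _ _ _
      have h3 := bm_le F u v
      have h4 := bm_le G u v
      rcases le_or_gt g (bm F u v) with h | h
      · rw [max_eq_left (by linarith)]
        have := sq_le_sq' (a := bm F u v - bm G u v) (b := 1 - g) (by linarith) (by linarith)
        linarith
      · rw [max_eq_right (by linarith)]
        have := sq_le_sq' (a := bm F u v - bm G u v) (b := 1 - bm F u v) (by linarith) (by linarith)
        nlinarith [mul_nonneg (sub_nonneg.2 h.le) (sub_nonneg.2 h1)]
    rw [integral_add (integrable_const _) (hmi.const_mul _), integral_const_mul] at this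
    simp only [integral_const, probReal_univ, one_smul] at this
    have hk := mul_le_mul_of_nonneg_left (key1 F u g) (show 0 ≤ 2 - g - p by linarith)
    nlinarith [mul_nonneg (sq_nonneg g) (sub_nonneg.2 hgp.le)]

/-- `∫ φ(u) F{u} dG = ∫ φ(u) G{u} dF` -/
lemma swap_atoms (F G : Measure (Euc d)) [IsProbabilityMeasure F] [IsProbabilityMeasure G]
    (φ : Euc d → ℝ) (hφ : Measurable φ) (h0 : ∀ x, 0 ≤ φ x) (h1 : ∀ x, φ x ≤ 1) :
    ∫ u, φ u * at' F u ∂G = ∫ u, φ u * at' G u ∂F := by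
  have hm : MeasurableSet {z : Euc d × Euc d | z.1 = z.2} :=
    measurableSet_eq_fun measurable_fst measurable_snd
  have hmm : Measurable (fun z : Euc d × Euc d => if z.1 = z.2 then φ z.1 else 0) :=
    Measurable.ite hm (hφ.comp measurable_fst) measurable_const
  have hi : Integrable (fun z : Euc d × Euc d => if z.1 = z.2 then φ z.1 else 0) (G.prod F) :=
    integ _ hmm 1 (fun z => by split_ifs <;> simp [h0]) (fun z => by split_ifs <;> simp [h1])
  have e := integral_integral_swap (f := fun a b : Euc d => if a = b then φ a else 0) hi
  have e1 : ∀ u, ∫ v, (if u = v then φ u else 0) ∂F = φ u * at' F u := by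
    intro u
    have : (fun v => if u = v then φ u else 0) = ({u} : Set (Euc d)).indicator (fun _ => φ u) := by
      ext v; simp [Set.indicator, eq_comm]
    rw [this, integral_indicator (measurableSet_singleton u)]
    simp [at', Measure.real, mul_comm]
  have e2 : ∀ v, ∫ u, (if u = v then φ u else 0) ∂G = φ v * at' G v := by
    intro v
    have : (fun u => if u = v then φ u else 0) = ({v} : Set (Euc d)).indicator (fun _ => φ v) := by
      ext u
      by_cases h : u = v <;> simp [Set.indicator, h]
    rw [this, integral_indicator (measurableSet_singleton v)]
    simp [at', Measure.real, mul_comm]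
  simp only [e1, e2] at e
  exact e

/-- double integral of bounded measurable function: inner is measurable and bounded -/
lemma integ2 (μ ν : Measure (Euc d)) [IsProbabilityMeasure μ] [IsProbabilityMeasure ν]
    {f : Euc d → Euc d → ℝ}
    (hf : Measurable (fun z : Euc d × Euc d => f z.1 z.2)) (h0 : ∀ x y, 0 ≤ f x y)
    (h1 : ∀ x y, f x y ≤ 1) : Integrable (fun u => ∫ v, f u v ∂ν) μ :=
  (integ (μ.prod ν) hf 1 (fun _ => h0 _ _) (fun _ => h1 _ _)).integral_prod_left

lemma key3 (F G : Measure (Euc d)) [IsProbabilityMeasure F] [IsProbabilityMeasure G] :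
    ∫ u, at' G u ^ 2 * (1 - at' F u) ∂F ≤ ∫ u, ∫ v, bm F u v * (1 - bm F u v) ∂G ∂G := by
  have hgF := meas_at F
  have hgG := meas_at G
  have hF := meas_bm F
  have e := swap_atoms F G (fun u => at' G u * (1 - at' F u))
    (hgG.mul (measurable_const.sub hgF))
    (fun x => mul_nonneg (at_nonneg _ _) (sub_nonneg.2 (at_le _ _)))
    (fun x => mul_le_one₀ (at_le _ _) (sub_nonneg.2 (at_le _ _)) (by linarith [at_nonneg F x]))
  have e' : ∫ u, at' G u ^ 2 * (1 - at' F u) ∂F = ∫ u, at' G u * (1 - at' F u) * at' F u ∂G := by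
    rw [e]; congr 1; ext u; ring
  rw [e']
  have hb0 : ∀ u v, 0 ≤ bm F u v * (1 - bm F u v) := fun u v =>
    mul_nonneg (bm_nonneg _ _ _) (sub_nonneg.2 (bm_le _ _ _))
  have hb1 : ∀ u v, bm F u v * (1 - bm F u v) ≤ 1 := fun u v =>
    mul_le_one₀ (bm_le _ _ _) (sub_nonneg.2 (bm_le _ _ _)) (by linarith [bm_nonneg F u v])
  have hbm : Measurable (fun z : Euc d × Euc d => bm F z.1 z.2 * (1 - bm F z.1 z.2)) :=
    hF.mul (measurable_const.sub hF)
  refine integral_mono_of_nonneg (Eventually.of_forall fun u => ?_) (integ2 G G hbm hb0 hb1)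
    (Eventually.of_forall fun u => ?_)
  · exact mul_nonneg (mul_nonneg (at_nonneg _ _) (sub_nonneg.2 (at_le _ _))) (at_nonneg _ _)
  · show at' G u * (1 - at' F u) * at' F u ≤ ∫ v, bm F u v * (1 - bm F u v) ∂G
    have h := setIntegral_le_integral (μ := G) (s := {u})
      (f := fun v => bm F u v * (1 - bm F u v))
      (integ _ ((meas_bm1 F u).mul (measurable_const.sub (meas_bm1 F u))) 1 (fun v => hb0 u v) (fun v => hb1 u v))
      (Eventually.of_forall fun v => hb0 u v)
    rw [integral_singleton, bm_self] at h
    have : G.real {u} = at' G u := rfl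
    rw [this, smul_eq_mul] at h
    linarith

lemma bm_dirac (w u v : Euc d) : bm (Measure.dirac w) u v = ind u v w := by
  unfold bm ind
  rw [Measure.dirac_apply' _ Metric.isClosed_closedBall.measurableSet]
  by_cases h : dist w u ≤ dist v u <;> simp [Set.indicator, h]

lemma ballDiv_dirac (G : Measure (Euc d)) [IsProbabilityMeasure G] (w : Euc d) :
    ballDiv (Measure.dirac w) G = (1 - at' G w) ^ 2
      + ∫ u, ∫ v, (ind u v w - bm G u v) ^ 2 ∂G ∂G := by
  have : ballDiv (Measure.dirac w) G
      = (∫ u, ∫ v, (bm (Measure.dirac w) u v - bm G u v) ^ 2 ∂(Measure.dirac w) ∂(Measure.dirac w))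
      + ∫ u, ∫ v, (bm (Measure.dirac w) u v - bm G u v) ^ 2 ∂G ∂G := rfl
  rw [this]
  simp only [bm_dirac, integral_dirac, bm_self]
  simp [ind]

lemma key4 (F G : Measure (Euc d)) [IsProbabilityMeasure F] [IsProbabilityMeasure G] :
    ∫ w, ∫ u, ∫ v, (ind u v w - bm G u v) ^ 2 ∂G ∂G ∂F
      = (∫ u, ∫ v, (bm F u v - bm G u v) ^ 2 ∂G ∂G)
        + ∫ u, ∫ v, bm F u v * (1 - bm F u v) ∂G ∂G := by
  have hF := meas_bm F
  have hG := meas_bm G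
  set π := G.prod G with hπ
  have hm3 : Measurable (fun z : (Euc d × Euc d) × Euc d =>
      (ind z.1.1 z.1.2 z.2 - bm G z.1.1 z.1.2) ^ 2) :=
    (meas_ind.sub (hG.comp measurable_fst)).pow_const 2
  have hb : ∀ u v w : Euc d, (ind u v w - bm G u v) ^ 2 ≤ 1 := fun u v w =>
    sq_sub_le (ind_nonneg _ _ _) (ind_le _ _ _) (bm_nonneg _ _ _) (bm_le _ _ _)
  have hi3 : Integrable (fun z : (Euc d × Euc d) × Euc d =>
      (ind z.1.1 z.1.2 z.2 - bm G z.1.1 z.1.2) ^ 2) (π.prod F) :=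
    integ _ hm3 1 (fun z => sq_nonneg _) (fun z => hb _ _ _)
  have e1 : ∀ w, ∫ u, ∫ v, (ind u v w - bm G u v) ^ 2 ∂G ∂G
      = ∫ z, (ind z.1 z.2 w - bm G z.1 z.2) ^ 2 ∂π := by
    intro w
    refine (integral_prod (fun z : Euc d × Euc d => (ind z.1 z.2 w - bm G z.1 z.2) ^ 2) ?_).symm
    exact integ _ (((meas_ind_uv w).sub hG).pow_const 2) 1 (fun z => sq_nonneg _) (fun z => hb _ _ _)
  simp only [e1]
  rw [← integral_integral_swap (f := fun (z : Euc d × Euc d) (w : Euc d) =>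
      (ind z.1 z.2 w - bm G z.1 z.2) ^ 2) hi3]
  have e2 : ∀ z : Euc d × Euc d, ∫ w, (ind z.1 z.2 w - bm G z.1 z.2) ^ 2 ∂F
      = (bm F z.1 z.2 - bm G z.1 z.2) ^ 2 + bm F z.1 z.2 * (1 - bm F z.1 z.2) := by
    intro z
    have hii : Integrable (fun w => ind z.1 z.2 w) F :=
      integ _ (meas_ind_w z.1 z.2) 1 (fun w => ind_nonneg _ _ _)
        (fun w => ind_le _ _ _)
    have : ∀ w, (ind z.1 z.2 w - bm G z.1 z.2) ^ 2
        = (1 - 2 * bm G z.1 z.2) * ind z.1 z.2 w + bm G z.1 z.2 ^ 2 := by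
      intro w
      have := ind_sq z.1 z.2 w
      linear_combination this
    simp only [this]
    rw [integral_add (hii.const_mul _) (integrable_const _), integral_const_mul, integral_ind]
    simp
    ring
  simp only [e2]
  have i1 : Integrable (fun z : Euc d × Euc d => (bm F z.1 z.2 - bm G z.1 z.2) ^ 2) π :=
    integ _ ((hF.sub hG).pow_const 2) 1 (fun v => sq_nonneg _)
      (fun v => sq_sub_le (bm_nonneg _ _ _) (bm_le _ _ _) (bm_nonneg _ _ _) (bm_le _ _ _))
  have i2 : Integrable (fun z : Euc d × Euc d => bm F z.1 z.2 * (1 - bm F z.1 z.2)) π :=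
    integ _ (hF.mul (measurable_const.sub hF)) 1
      (fun z => mul_nonneg (bm_nonneg _ _ _) (sub_nonneg.2 (bm_le _ _ _)))
      (fun z => mul_le_one₀ (bm_le _ _ _) (sub_nonneg.2 (bm_le _ _ _))
        (by linarith [bm_nonneg F z.1 z.2]))
  rw [integral_add i1 i2, integral_prod _ i1, integral_prod _ i2]

end BD

open BD in
/-- For Borel probability measures `F, G` on `ℝ^d`, the ball divergence
satisfies `Θ²(F, G) ≤ ∫ Θ²(δ_w, G) dF(w)`, where `δ_w` is the Dirac point mass at `w`. -/
theorem ballDiv_le_integral_ballDiv_dirac {d : ℕ} (F G : Measure (Euc d))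
    [IsProbabilityMeasure F] [IsProbabilityMeasure G] :
    ballDiv F G ≤ ∫ w, ballDiv (Measure.dirac w) G ∂F := by
  have hF := meas_bm F
  have hG := meas_bm G
  simp only [ballDiv_dirac]
  have i1 : Integrable (fun w => (1 - at' G w) ^ 2) F :=
    integ _ ((measurable_const.sub (meas_at G)).pow_const 2) 1 (fun _ => sq_nonneg _)
      (fun w => sq_sub_le zero_le_one le_rfl (at_nonneg _ _) (at_le _ _))
  have i1' : Integrable (fun w => at' G w ^ 2 * (1 - at' F w)) F :=
    integ _ (((meas_at G).pow_const 2).mul (measurable_const.sub (meas_at F))) 1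
      (fun w => mul_nonneg (sq_nonneg _) (sub_nonneg.2 (at_le _ _)))
      (fun w => mul_le_one₀ (pow_le_one₀ (at_nonneg _ _) (at_le _ _)) (sub_nonneg.2 (at_le _ _))
        (by linarith [at_nonneg F w]))
  have i2 : Integrable (fun w => ∫ u, ∫ v, (ind u v w - bm G u v) ^ 2 ∂G ∂G) F := by
    have hm3 : Measurable (fun z : (Euc d × Euc d) × Euc d =>
        (ind z.1.1 z.1.2 z.2 - bm G z.1.1 z.1.2) ^ 2) :=
      (meas_ind.sub (hG.comp measurable_fst)).pow_const 2
    have hb : ∀ u v w : Euc d, (ind u v w - bm G u v) ^ 2 ≤ 1 := fun u v w =>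
      sq_sub_le (ind_nonneg _ _ _) (ind_le _ _ _) (bm_nonneg _ _ _) (bm_le _ _ _)
    have hi3 : Integrable (fun z : (Euc d × Euc d) × Euc d =>
        (ind z.1.1 z.1.2 z.2 - bm G z.1.1 z.1.2) ^ 2) ((G.prod G).prod F) :=
      integ _ hm3 1 (fun z => sq_nonneg _) (fun z => hb _ _ _)
    have := hi3.integral_prod_right
    refine this.congr (Eventually.of_forall fun w => ?_)
    refine integral_prod (fun z : Euc d × Euc d => (ind z.1 z.2 w - bm G z.1 z.2) ^ 2) ?_
    exact integ _ (((meas_ind_uv w).sub hG).pow_const 2) 1 (fun z => sq_nonneg _) (fun z => hb _ _ _)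
  rw [integral_add i1 i2, key4]
  have hd : ballDiv F G = (∫ u, ∫ v, (bm F u v - bm G u v) ^ 2 ∂F ∂F)
      + ∫ u, ∫ v, (bm F u v - bm G u v) ^ 2 ∂G ∂G := rfl
  rw [hd]
  have hA : ∫ u, ∫ v, (bm F u v - bm G u v) ^ 2 ∂F ∂F
      ≤ ∫ u, ((1 - at' G u) ^ 2 + at' G u ^ 2 * (1 - at' F u)) ∂F := by
    refine integral_mono (integ2 F F ((hF.sub hG).pow_const 2) (fun _ _ => sq_nonneg _)
      (fun _ _ => sq_sub_le (bm_nonneg _ _ _) (bm_le _ _ _) (bm_nonneg _ _ _) (bm_le _ _ _)))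
      (i1.add i1') ?_
    intro u
    exact key2 F G u
  rw [integral_add i1 i1'] at hA
  have := key3 F G
  linarith

end
end
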